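/- arXiv:1401.6450 — 2 statements merged into one kernel-verified Lean document; each statement's English description precedes it below -/
import Mathlib

section
/- For every finite V ⊂ ℤ^d and every measurable A ⊆ Ω, the random variable γ_V^Y(X, A) is a version of the conditional probability P[X ∈ A | σ(X_w : w ∉ V) ∨ σ(Y)]; that is, almost surely P[X ∈ A | X_{V^c}, Y] = γ_V^Y(X, A). -/
open MeasureTheory Filter

noncomputable section

namespace RandomField

/-- Sites of the lattice `ℤ^d`. -/
abbrev Site (d : ℕ) := Fin d → ℤ

variable {E : Type*} [MeasurableSpace E] {d : ℕ}

/-- Configurations `E^{ℤ^d}`. -/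
abbrev Conf (E : Type*) (d : ℕ) := Site d → E

/-- The cylinder σ-algebra `σ(X_S)` on `E^{ℤ^d}` generated by the coordinates in `S`. -/
def cylσ (E : Type*) [MeasurableSpace E] {d : ℕ} (S : Set (Site d)) :
    MeasurableSpace (Conf E d) :=
  ⨆ v ∈ S, MeasurableSpace.comap (fun x : Conf E d => x v) inferInstance

/-- Nearest neighbors: `‖v - w‖ = 1`. -/
def Adj (v w : Site d) : Prop := (∑ i, (v i - w i).natAbs) = 1

/-- The exterior boundary `∂V` of a finite set of sites `V`. -/
def bdry (V : Finset (Site d)) : Set (Site d) := {w | w ∉ V ∧ ∃ v ∈ V, Adj v w}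

/-- A specification: a family of probability kernels `γ_V` indexed by finite `V ⊂ ℤ^d` with
(1) `γ_V(·, A)` is `σ(X_{∂V})`-measurable for `A ∈ σ(X_V)`;
(2) `γ_V(x, A) = 1_A(x)` for `A ∈ σ(X_{V^c})`;
(3) `γ_V γ_W = γ_V` for `W ⊆ V`. -/
structure IsSpecification (γ : Finset (Site d) → Conf E d → Measure (Conf E d)) : Prop where
  prob : ∀ V x, IsProbabilityMeasure (γ V x)
  kernel : ∀ (V) (A : Set (Conf E d)), MeasurableSet A → Measurable fun x => γ V x A
  bdryMeas : ∀ (V : Finset (Site d)) (A : Set (Conf E d)),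
    MeasurableSet[cylσ E (↑V : Set (Site d))] A →
    Measurable[cylσ E (bdry V)] fun x => γ V x A
  proper : ∀ (V : Finset (Site d)) (A : Set (Conf E d)),
    MeasurableSet[cylσ E ((↑V : Set (Site d))ᶜ)] A →
    ∀ x, γ V x A = A.indicator (fun _ => (1 : ENNReal)) x
  consistent : ∀ V W : Finset (Site d), W ⊆ V → ∀ (A : Set (Conf E d)), MeasurableSet A →
    ∀ x, ∫⁻ z, γ W z A ∂(γ V x) = γ V x A

/-- The conditional specification
`γ_V^y(x, A) = ∫ 1_A(z) ∏_{v∈V} g_v(z_v, y_v) γ_V(x, dz) / ∫ ∏_{v∈V} g_v(z_v, y_v) γ_V(x, dz)`. -/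
def condKer {F : Type*} (γ : Finset (Site d) → Conf E d → Measure (Conf E d))
    (g : Site d → E → F → ℝ) (y : Site d → F) (V : Finset (Site d)) (x : Conf E d) :
    Measure (Conf E d) :=
  let ρ := (γ V x).withDensity fun z => ENNReal.ofReal (∏ v ∈ V, g v (z v) (y v))
  (ρ Set.univ)⁻¹ • ρ

/-- The σ-algebra `σ(X_w : w ∉ V)` on the underlying probability space. -/
def outsideσ {Ω : Type*} [MeasurableSpace Ω] (X : Ω → Conf E d) (V : Finset (Site d)) :
    MeasurableSpace Ω :=
  ⨆ w ∈ ((↑V : Set (Site d))ᶜ), MeasurableSpace.comap (fun ω => X ω w) inferInstance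


lemma measurable_lint {α β δ : Type*} [MeasurableSpace α] [MeasurableSpace β] [MeasurableSpace δ]
    (κ : α → Measure β) (hp : ∀ a, IsProbabilityMeasure (κ a))
    (hκ : ∀ A, MeasurableSet A → Measurable fun a => κ a A)
    (f : β × δ → ENNReal) (hf : Measurable f) :
    Measurable fun p : α × δ => ∫⁻ z, f (z, p.2) ∂κ p.1 := by
  let K : ProbabilityTheory.Kernel α β := ⟨κ, Measure.measurable_of_measurable_coe _ hκ⟩
  have : ProbabilityTheory.IsMarkovKernel K := ⟨hp⟩
  let K' : ProbabilityTheory.Kernel (α × δ) β := K.comap Prod.fst measurable_fst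
  have h : Measurable (Function.uncurry fun (p : α × δ) (z : β) => f (z, p.2)) := by
    apply hf.comp; fun_prop
  exact Measurable.lintegral_kernel_prod_right (κ := K') h

lemma section_meas {α β δ : Type*} [MeasurableSpace α] [MeasurableSpace β] [MeasurableSpace δ]
    (f : α × β → δ) (hf : Measurable f) (y : β) : Measurable fun x => f (x, y) :=
  hf.comp (by fun_prop)

lemma comap_meas {Ω β δ : Type*} [mβ : MeasurableSpace β] [MeasurableSpace δ] (Z : Ω → β)
    (f : β → δ) (hf : Measurable f) :
    Measurable[MeasurableSpace.comap Z mβ] (fun ω => f (Z ω)) :=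
  hf.comp (comap_measurable Z)

lemma ext_cyl {α ι F : Type*} [MeasurableSpace α] [MeasurableSpace F]
    (μ ν : Measure (α × (ι → F))) [IsFiniteMeasure μ]
    (h : ∀ (B : Set α) (S : Finset ι) (D : ι → Set F), MeasurableSet B →
      (∀ v, MeasurableSet (D v)) →
      μ (B ×ˢ {y | ∀ v ∈ S, y v ∈ D v}) = ν (B ×ˢ {y | ∀ v ∈ S, y v ∈ D v})) : μ = ν := by
  apply Measure.ext_prod
  intro s t hs ht
  have key : (μ.restrict (s ×ˢ Set.univ)).map Prod.snd
      = (ν.restrict (s ×ˢ Set.univ)).map Prod.snd := by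
    have e : ∀ (μ : Measure (α × (ι → F))) (t : Set (ι → F)), MeasurableSet t →
        (μ.restrict (s ×ˢ Set.univ)).map Prod.snd t = μ (s ×ˢ t) := by
      intro μ t ht
      rw [Measure.map_apply measurable_snd ht, Measure.restrict_apply (measurable_snd ht)]
      congr 1; ext ⟨a, b⟩; simp [and_comm]
    refine ext_of_generate_finite
      (squareCylinders fun _ : ι => {s : Set F | MeasurableSet s})
      (generateFrom_squareCylinders).symm
      (isPiSystem_squareCylinders (fun _ => MeasurableSpace.isPiSystem_measurableSet)
        (fun _ => MeasurableSet.univ)) ?_ ?_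
    · rintro _ ⟨S, D, hD, rfl⟩
      have hD' : ∀ v, MeasurableSet (D v) := fun v => hD v trivial
      have hm : MeasurableSet ((S : Set ι).pi D) :=
        MeasurableSet.pi S.countable_toSet (fun v _ => hD' v)
      rw [e _ _ hm, e _ _ hm]
      exact h s S D hs hD'
    · rw [e _ _ .univ, e _ _ .univ]
      simpa using h s ∅ (fun _ => Set.univ) hs (fun _ => .univ)
  have e : ∀ (μ : Measure (α × (ι → F))) (t : Set (ι → F)), MeasurableSet t →
      (μ.restrict (s ×ˢ Set.univ)).map Prod.snd t = μ (s ×ˢ t) := by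
    intro μ t ht
    rw [Measure.map_apply measurable_snd ht, Measure.restrict_apply (measurable_snd ht)]
    congr 1; ext ⟨a, b⟩; simp [and_comm]
  rw [← e _ _ ht, ← e _ _ ht, key]

lemma cylσ_mono {S T : Set (Site d)} (h : S ⊆ T) : cylσ E S ≤ cylσ E T :=
  biSup_mono h

lemma cylσ_le (S : Set (Site d)) : cylσ E S ≤ MeasurableSpace.pi :=
  iSup₂_le fun v _ => (measurable_pi_apply v).comap_le

lemma measurable_coord {S : Set (Site d)} {v : Site d} (hv : v ∈ S) :
    Measurable[cylσ E S] (fun x : Conf E d => x v) :=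
  Measurable.of_comap_le (le_iSup₂_of_le v hv le_rfl)

lemma pi_eq_gen (V : Set (Site d)) : (MeasurableSpace.pi : MeasurableSpace (Conf E d)) =
    MeasurableSpace.generateFrom {s | ∃ A B, MeasurableSet[cylσ E V] A ∧
      MeasurableSet[cylσ E Vᶜ] B ∧ s = A ∩ B} := by
  apply le_antisymm
  · refine iSup_le fun v => ?_
    rintro s hs
    apply MeasurableSpace.measurableSet_generateFrom
    by_cases hv : v ∈ V
    · exact ⟨s, Set.univ, (le_iSup₂_of_le (f := fun v (_ : v ∈ V) =>
        MeasurableSpace.comap (fun x : Conf E d => x v) inferInstance) v hv le_rfl) s hs,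
        @MeasurableSet.univ _ (_), by simp⟩
    · exact ⟨Set.univ, s, @MeasurableSet.univ _ (_), (le_iSup₂_of_le (f := fun v (_ : v ∈ Vᶜ) =>
        MeasurableSpace.comap (fun x : Conf E d => x v) inferInstance) v hv le_rfl) s hs,
         by simp⟩
  · apply MeasurableSpace.generateFrom_le
    rintro _ ⟨A, B, hA, hB, rfl⟩
    exact (cylσ_le _ _ hA).inter (cylσ_le _ _ hB)

lemma gamma_ae {γ : Finset (Site d) → Conf E d → Measure (Conf E d)} (hγ : IsSpecification γ)
    (V : Finset (Site d)) (k : Conf E d → ENNReal)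
    (hk : Measurable[cylσ E ((↑V : Set (Site d))ᶜ)] k) (x : Conf E d) :
    ∀ᵐ z ∂γ V x, k z = k x := by
  have := hγ.prob V x
  have hs : MeasurableSet[cylσ E ((↑V : Set (Site d))ᶜ)] {z | k z = k x} :=
    hk (measurableSet_singleton (k x))
  have h1 := hγ.proper V _ hs x
  rw [Set.indicator_of_mem (by simp)] at h1
  exact (prob_compl_eq_zero_iff (cylσ_le _ _ hs)).2 h1

lemma gamma_meas {γ : Finset (Site d) → Conf E d → Measure (Conf E d)} (hγ : IsSpecification γ)
    (V : Finset (Site d)) (A : Set (Conf E d)) (hA : MeasurableSet A) :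
    Measurable[cylσ E ((↑V : Set (Site d))ᶜ)] fun x => γ V x A := by
  have hp := hγ.prob V
  induction A, hA using MeasurableSpace.induction_on_inter (pi_eq_gen (V : Set (Site d))) with
  | h_inter =>
    rintro _ ⟨A, B, hA, hB, rfl⟩ _ ⟨A', B', hA', hB', rfl⟩ _
    exact ⟨A ∩ A', B ∩ B', @MeasurableSet.inter _ (_) _ _ hA hA',
      @MeasurableSet.inter _ (_) _ _ hB hB', Set.inter_inter_inter_comm _ _ _ _⟩
  | empty => simp only [measure_empty]; exact @measurable_const _ _ _ (_) _
  | basic s hs =>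
    obtain ⟨A, B, hA, hB, rfl⟩ := hs
    have h1 : Measurable[cylσ E ((↑V : Set (Site d))ᶜ)] fun x => γ V x A :=
      (hγ.bdryMeas V A hA).mono (cylσ_mono fun w hw => by simpa using hw.1) le_rfl
    have h2 : (fun x => γ V x (A ∩ B)) = B.indicator (fun x => γ V x A) := by
      funext x
      have hB1 := hγ.proper V B hB x
      by_cases hx : x ∈ B
      · rw [Set.indicator_of_mem hx] at hB1 ⊢
        rw [Set.inter_comm]
        exact Measure.measure_inter_eq_of_ae
          ((prob_compl_eq_zero_iff (cylσ_le _ _ hB)).2 hB1)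
      · rw [Set.indicator_of_notMem hx] at hB1 ⊢
        exact measure_mono_null Set.inter_subset_right hB1
    rw [h2]
    exact Measurable.indicator h1 hB
  | compl s hs ih =>
    have : (fun x => γ V x sᶜ) = fun x => 1 - γ V x s := by
      funext x; rw [prob_compl_eq_one_sub hs]
    rw [this]
    exact Measurable.const_sub ih 1
  | iUnion f hd hf ih =>
    have : (fun x => γ V x (⋃ i, f i)) = fun x => ∑' i, γ V x (f i) := by
      funext x; rw [measure_iUnion hd hf]
    rw [this]
    exact Measurable.ennreal_tsum ih

/-- product density -/
def Gd {F : Type*} (g : Site d → E → F → ℝ) (V : Finset (Site d)) (x : Conf E d)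
    (y : Site d → F) : ENNReal := ENNReal.ofReal (∏ v ∈ V, g v (x v) (y v))

lemma Gd_meas {F : Type*} [MeasurableSpace F] (g : Site d → E → F → ℝ)
    (hgm : ∀ v, Measurable (Function.uncurry (g v))) (V : Finset (Site d)) :
    Measurable fun p : Conf E d × (Site d → F) => Gd g V p.1 p.2 := by
  unfold Gd
  refine ENNReal.measurable_ofReal.comp (Finset.measurable_prod _ fun v _ => ?_)
  exact (hgm v).comp (f := fun p : Conf E d × (Site d → F) => (p.1 v, p.2 v)) (by fun_prop)

lemma Gd_meas_out {F : Type*} [MeasurableSpace F] (g : Site d → E → F → ℝ)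
    (hgm : ∀ v, Measurable (Function.uncurry (g v))) (V : Finset (Site d)) (S : Set (Site d))
    (h : (V : Set (Site d)) ⊆ S) (y : Site d → F) :
    Measurable[cylσ E S] fun x : Conf E d => Gd g V x y := by
  unfold Gd
  refine ENNReal.measurable_ofReal.comp (Finset.measurable_prod _ fun v hv => ?_)
  have h1 : Measurable fun e => g v e (y v) :=
    (hgm v).comp (f := fun e : E => (e, y v)) (by fun_prop)
  exact h1.comp (measurable_coord (h hv))

lemma condKer_apply {F : Type*} (γ : Finset (Site d) → Conf E d → Measure (Conf E d))
    (g : Site d → E → F → ℝ) (y : Site d → F) (V : Finset (Site d)) (x : Conf E d)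
    (A : Set (Conf E d)) (hA : MeasurableSet A) :
    condKer γ g y V x A = (∫⁻ z, Gd g V z y ∂γ V x)⁻¹ *
      ∫⁻ z, A.indicator (fun z => Gd g V z y) z ∂γ V x := by
  simp only [condKer, Measure.smul_apply, smul_eq_mul]
  rw [withDensity_apply _ .univ, withDensity_apply _ hA, lintegral_indicator hA,
    Measure.restrict_univ]
  rfl

lemma condKer_meas {F : Type*} [MeasurableSpace F]
    {γ : Finset (Site d) → Conf E d → Measure (Conf E d)} (hγ : IsSpecification γ)
    (g : Site d → E → F → ℝ) (hgm : ∀ v, Measurable (Function.uncurry (g v)))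
    (V : Finset (Site d)) (A : Set (Conf E d)) (hA : MeasurableSet A) :
    Measurable[(cylσ E ((↑V : Set (Site d))ᶜ)).prod MeasurableSpace.pi]
      fun p : Conf E d × (Site d → F) => condKer γ g p.2 V p.1 A := by
  simp_rw [condKer_apply γ g _ V _ A hA]
  have h1 := @measurable_lint (Conf E d) (Conf E d) (Site d → F)
    (cylσ E ((↑V : Set (Site d))ᶜ)) _ _ (γ V) (hγ.prob V) (gamma_meas hγ V)
    (fun p => Gd g V p.1 p.2) (Gd_meas g hgm V)
  have h2 := @measurable_lint (Conf E d) (Conf E d) (Site d → F)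
    (cylσ E ((↑V : Set (Site d))ᶜ)) _ _ (γ V) (hγ.prob V) (gamma_meas hγ V)
    (fun p => (Prod.fst ⁻¹' A).indicator (fun p => Gd g V p.1 p.2) p)
    ((Gd_meas g hgm V).indicator (measurable_fst hA))
  exact Measurable.mul h1.inv h2

lemma norm_pos_fin [Fintype E] {F : Type*} [MeasurableSpace F]
    {γ : Finset (Site d) → Conf E d → Measure (Conf E d)} (hγ : IsSpecification γ)
    (g : Site d → E → F → ℝ) (hgm : ∀ v, Measurable (Function.uncurry (g v)))
    (hgpos : ∀ v e y, 0 < g v e y)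
    (V : Finset (Site d)) (y : Site d → F) (x : Conf E d) :
    (∫⁻ z, Gd g V z y ∂γ V x) ≠ 0 ∧ (∫⁻ z, Gd g V z y ∂γ V x) ≠ ⊤ := by
  have := hγ.prob V x
  have hm : Measurable fun z : Conf E d => Gd g V z y :=
    (Gd_meas g hgm V).comp (by fun_prop : Measurable fun z : Conf E d => (z, y))
  constructor
  · rw [Ne, lintegral_eq_zero_iff hm]
    intro h
    have hb : ∀ᵐ z ∂γ V x, False := by
      filter_upwards [h] with z hz
      simp only [Gd, Pi.zero_apply, ENNReal.ofReal_eq_zero] at hz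
      exact absurd hz (not_le.2 (Finset.prod_pos fun v _ => hgpos _ _ _))
    rw [Filter.eventually_false_iff_eq_bot, ae_eq_bot] at hb
    exact IsProbabilityMeasure.ne_zero _ hb
  · have : ∀ z, Gd g V z y ≤ ENNReal.ofReal (∏ v ∈ V, ∑ e, g v e (y v)) := by
      intro z
      apply ENNReal.ofReal_le_ofReal
      refine Finset.prod_le_prod (fun v _ => (hgpos _ _ _).le) fun v _ => ?_
      exact Finset.single_le_sum (f := fun e => g v e (y v)) (fun e _ => (hgpos _ _ _).le)
        (Finset.mem_univ _)
    refine ne_top_of_le_ne_top ?_ (lintegral_mono this)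
    simp

lemma condKer_le_one [Fintype E] {F : Type*} [MeasurableSpace F]
    {γ : Finset (Site d) → Conf E d → Measure (Conf E d)} (hγ : IsSpecification γ)
    (g : Site d → E → F → ℝ) (hgm : ∀ v, Measurable (Function.uncurry (g v)))
    (hgpos : ∀ v e y, 0 < g v e y)
    (V : Finset (Site d)) (y : Site d → F) (x : Conf E d) (A : Set (Conf E d)) :
    condKer γ g y V x A ≤ 1 := by
  obtain ⟨h1, h2⟩ := norm_pos_fin hγ g hgm hgpos V y x
  refine (measure_mono (Set.subset_univ A)).trans ?_
  rw [condKer_apply _ _ _ _ _ _ .univ, Set.indicator_univ, ENNReal.inv_mul_cancel h1 h2]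

lemma fixed_y [Fintype E] {F : Type*} [MeasurableSpace F]
    {γ : Finset (Site d) → Conf E d → Measure (Conf E d)} (hγ : IsSpecification γ)
    (g : Site d → E → F → ℝ) (hgm : ∀ v, Measurable (Function.uncurry (g v)))
    (hgpos : ∀ v e y, 0 < g v e y)
    (V : Finset (Site d)) (y : Site d → F) (μ : Measure (Conf E d)) (hμ : μ.bind (γ V) = μ)
    (k : Conf E d → ENNReal) (hk : Measurable[cylσ E ((↑V : Set (Site d))ᶜ)] k)
    (A : Set (Conf E d)) (hA : MeasurableSet A) :
    ∫⁻ x, k x * Gd g V x y * condKer γ g y V x A ∂μ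
      = ∫⁻ x, k x * A.indicator (fun x => Gd g V x y) x ∂μ := by
  have hγm : AEMeasurable (γ V) μ :=
    (Measure.measurable_of_measurable_coe _ (hγ.kernel V)).aemeasurable
  have hG : Measurable fun z : Conf E d => Gd g V z y :=
    (Gd_meas g hgm V).comp (by fun_prop : Measurable fun z : Conf E d => (z, y))
  have main : ∀ (k h : Conf E d → ENNReal), Measurable[cylσ E ((↑V : Set (Site d))ᶜ)] k →
      Measurable h → ∫⁻ x, k x * h x ∂μ = ∫⁻ x, k x * ∫⁻ z, h z ∂γ V x ∂μ := by
    intro k h hk hh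
    conv_lhs => rw [← hμ]
    have hk' : Measurable k := hk.mono (cylσ_le _) le_rfl
    rw [Measure.lintegral_bind hγm (by fun_prop)]
    congr 1; funext x
    rw [← lintegral_const_mul _ hh]
    refine lintegral_congr_ae ?_
    filter_upwards [gamma_ae hγ V k hk x] with z hz
    rw [hz]
  have hR : Measurable[cylσ E ((↑V : Set (Site d))ᶜ)] fun x => condKer γ g y V x A :=
    @section_meas (Conf E d) (Site d → F) _ (cylσ E ((↑V : Set (Site d))ᶜ)) _ _
      (fun p => condKer γ g p.2 V p.1 A) (condKer_meas hγ g hgm V A hA) y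
  have hkR : Measurable[cylσ E ((↑V : Set (Site d))ᶜ)] fun x => k x * condKer γ g y V x A :=
    Measurable.mul hk hR
  rw [main k _ hk (hG.indicator hA)]
  have e : ∀ x, k x * Gd g V x y * condKer γ g y V x A
      = (k x * condKer γ g y V x A) * Gd g V x y := fun x => mul_right_comm _ _ _
  rw [lintegral_congr e, main _ _ hkR hG]
  congr 1; funext x
  obtain ⟨h1, h2⟩ := norm_pos_fin hγ g hgm hgpos V y x
  rw [mul_assoc, condKer_apply _ _ _ _ _ _ hA, mul_right_comm, ENNReal.inv_mul_cancel h1 h2,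
    one_mul]

lemma pi_int {F : Type*} [MeasurableSpace F] (φ : Measure F) [SigmaFinite φ] {ι : Type*}
    [Fintype ι] (f : ι → F → ℝ) (hf : ∀ i, Integrable (f i) φ) (hp : ∀ i y, 0 ≤ f i y)
    (D : ι → Set F) (hD : ∀ i, MeasurableSet (D i)) :
    ∫⁻ y in Set.univ.pi D, ENNReal.ofReal (∏ i, f i (y i)) ∂(Measure.pi fun _ : ι => φ)
      = ENNReal.ofReal (∏ i, ∫ y in D i, f i y ∂φ) := by
  rw [Measure.restrict_pi_pi, ← integral_fintype_prod_eq_prod,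
    ofReal_integral_eq_lintegral_ofReal]
  · exact Integrable.fintype_prod fun i => (hf i).integrableOn
  · exact ae_of_all _ fun y => Finset.prod_nonneg fun i _ => hp _ _


lemma joint [Fintype E] {F : Type*} [MeasurableSpace F]
    {Ω : Type*} [MeasurableSpace Ω] (P : Measure Ω) [IsProbabilityMeasure P]
    (φ : Measure F) [SigmaFinite φ]
    (g : Site d → E → F → ℝ) (hgm : ∀ v, Measurable (Function.uncurry (g v)))
    (hgpos : ∀ v e y, 0 < g v e y) (hgint : ∀ v e, ∫ y, g v e y ∂φ = 1)
    (X : Ω → Conf E d) (hXm : Measurable X)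
    (Y : Ω → Site d → F) (hYm : Measurable Y)
    (hobs : ∀ (S : Finset (Site d)) (B : Site d → Set F), (∀ v, MeasurableSet (B v)) →
      P[(fun ω => Set.indicator {ω' | ∀ v ∈ S, Y ω' v ∈ B v} (fun _ => (1 : ℝ)) ω)|
          MeasurableSpace.comap X inferInstance] =ᵐ[P]
        fun ω => ∏ v ∈ S, ∫ y in B v, g v (X ω v) y ∂φ) (S : Finset (Site d)) :
    P.map (fun ω => (X ω, fun v : S => Y ω v)) =
      ((P.map X).prod (Measure.pi fun _ : S => φ)).withDensity
        (fun p => ENNReal.ofReal (∏ v : S, g v (p.1 v) (p.2 v))) := by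
  classical
  have hZ : Measurable (fun ω => (X ω, fun v : S => Y ω v)) :=
    hXm.prodMk (measurable_pi_lambda _ fun v => (measurable_pi_apply _).comp hYm)
  have hGm : Measurable (fun p : Conf E d × (S → F) =>
      ENNReal.ofReal (∏ v : S, g v (p.1 v) (p.2 v))) := by
    refine ENNReal.measurable_ofReal.comp (Finset.measurable_prod _ fun v _ => ?_)
    exact (hgm v).comp (f := fun p : Conf E d × (S → F) => (p.1 v, p.2 v)) (by fun_prop)
  have : IsProbabilityMeasure (P.map (fun ω => (X ω, fun v : S => Y ω v))) :=
    Measure.isProbabilityMeasure_map hZ.aemeasurable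
  have : IsProbabilityMeasure (P.map X) := Measure.isProbabilityMeasure_map hXm.aemeasurable
  have hgi : ∀ v e, Integrable (g v e) φ := fun v e =>
    Integrable.of_integral_ne_zero (by rw [hgint]; exact one_ne_zero)
  apply ext_cyl
  intro B S' D0 hB hD0
  let D : Site d → Set F := fun v =>
    if h : v ∈ S then (if (⟨v, h⟩ : S) ∈ S' then D0 ⟨v, h⟩ else Set.univ) else Set.univ
  have hD : ∀ v, MeasurableSet (D v) := by
    intro v; simp only [D]; split_ifs
    exacts [hD0 _, .univ, .univ]
  have hset : {y : S → F | ∀ v ∈ S', y v ∈ D0 v} = Set.univ.pi (fun v : S => D v) := by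
    ext y
    rw [Set.mem_univ_pi]
    refine forall_congr' fun v => ?_
    have hv : (v : Site d) ∈ S := v.2
    by_cases h : v ∈ S' <;> simp [D, h]
  rw [hset]
  have hpi : MeasurableSet (Set.univ.pi (fun v : S => D v)) :=
    MeasurableSet.univ_pi fun v => hD v
  rw [Measure.map_apply hZ (hB.prod hpi), withDensity_apply _ (hB.prod hpi),
    ← Measure.prod_restrict, lintegral_prod _ hGm.aemeasurable]
  have hr : ∀ x : Conf E d,
      ∫⁻ y in Set.univ.pi (fun v : S => D v), ENNReal.ofReal (∏ v : S, g v (x v) (y v))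
        ∂(Measure.pi fun _ : S => φ) = ENNReal.ofReal (∏ v ∈ S, ∫ y in D v, g v (x v) y ∂φ) := by
    intro x
    rw [pi_int φ (fun v : S => g v (x v)) (fun v => hgi _ _) (fun v y => (hgpos _ _ _).le)
      (fun v => D v) (fun v => hD v), Finset.prod_coe_sort S (fun v => ∫ y in D v, g v (x v) y ∂φ)]
  simp only [hr]
  have hmm : Measurable fun x : Conf E d =>
      ENNReal.ofReal (∏ v ∈ S, ∫ y in D v, g v (x v) y ∂φ) := by
    simp only [← hr]
    exact hGm.lintegral_prod_right'
  rw [setLIntegral_map hB hmm hXm]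
  have hle : MeasurableSpace.comap X inferInstance ≤ (inferInstance : MeasurableSpace Ω) :=
    hXm.comap_le
  have hY : MeasurableSet {ω' | ∀ v ∈ S, Y ω' v ∈ D v} := by
    have : {ω' | ∀ v ∈ S, Y ω' v ∈ D v} = (fun ω => (X ω, fun v : S => Y ω v)) ⁻¹'
      (Set.univ ×ˢ Set.univ.pi (fun v : S => D v)) := by ext; simp
    rw [this]; exact hZ (MeasurableSet.univ.prod hpi)
  have hint : Integrable (fun ω => Set.indicator {ω' | ∀ v ∈ S, Y ω' v ∈ D v}
      (fun _ => (1 : ℝ)) ω) P := (integrable_const 1).indicator hY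
  have hob := hobs S D hD
  have hI : Integrable (fun ω => ∏ v ∈ S, ∫ y in D v, g v (X ω v) y ∂φ) P :=
    integrable_condExp.congr hob
  have hXB : MeasurableSet (X ⁻¹' B) := hXm hB
  have h1 := setIntegral_condExp hle hint (s := X ⁻¹' B) ⟨B, hB, rfl⟩
  rw [integral_congr_ae (ae_restrict_of_ae hob), integral_indicator_const _ hY] at h1
  rw [← ofReal_integral_eq_lintegral_ofReal hI.integrableOn (ae_of_all _ fun ω =>
    Finset.prod_nonneg fun v _ => integral_nonneg fun y => (hgpos _ _ _).le), h1]
  rw [smul_eq_mul, mul_one, ofReal_measureReal, Measure.restrict_apply hY]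
  congr 1
  ext ω
  simp [and_comm]

lemma joint_lint [Fintype E] {F : Type*} [MeasurableSpace F] [Nonempty F]
    {Ω : Type*} [MeasurableSpace Ω] (P : Measure Ω) [IsProbabilityMeasure P]
    (φ : Measure F) [SigmaFinite φ]
    (g : Site d → E → F → ℝ) (hgm : ∀ v, Measurable (Function.uncurry (g v)))
    (hgpos : ∀ v e y, 0 < g v e y) (hgint : ∀ v e, ∫ y, g v e y ∂φ = 1)
    (X : Ω → Conf E d) (hXm : Measurable X)
    (Y : Ω → Site d → F) (hYm : Measurable Y)
    (hobs : ∀ (S : Finset (Site d)) (B : Site d → Set F), (∀ v, MeasurableSet (B v)) →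
      P[(fun ω => Set.indicator {ω' | ∀ v ∈ S, Y ω' v ∈ B v} (fun _ => (1 : ℝ)) ω)|
          MeasurableSpace.comap X inferInstance] =ᵐ[P]
        fun ω => ∏ v ∈ S, ∫ y in B v, g v (X ω v) y ∂φ) (S : Finset (Site d)) :
    ∃ ρ : Measure (Site d → F), ∀ h : Conf E d → (Site d → F) → ENNReal,
      Measurable (Function.uncurry h) →
      (∀ x y y', (∀ v ∈ S, y v = y' v) → h x y = h x y') →
      ∫⁻ ω, h (X ω) (Y ω) ∂P = ∫⁻ y, ∫⁻ x, Gd g S x y * h x y ∂(P.map X) ∂ρ := by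
  classical
  obtain ⟨y0⟩ := (inferInstance : Nonempty F)
  let ext : (S → F) → Site d → F := fun y v => if hv : v ∈ S then y ⟨v, hv⟩ else y0
  have hext : Measurable ext := by
    refine measurable_pi_lambda _ fun v => ?_
    simp only [ext]
    split_ifs <;> fun_prop
  have : IsProbabilityMeasure (P.map X) := Measure.isProbabilityMeasure_map hXm.aemeasurable
  refine ⟨(Measure.pi fun _ : S => φ).map ext, fun h hh hdep => ?_⟩
  have hZ : Measurable (fun ω => (X ω, fun v : S => Y ω v)) :=
    hXm.prodMk (measurable_pi_lambda _ fun v => (measurable_pi_apply _).comp hYm)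
  have hGm : Measurable (fun p : Conf E d × (S → F) =>
      ENNReal.ofReal (∏ v : S, g v (p.1 v) (p.2 v))) := by
    refine ENNReal.measurable_ofReal.comp (Finset.measurable_prod _ fun v _ => ?_)
    exact (hgm v).comp (f := fun p : Conf E d × (S → F) => (p.1 v, p.2 v)) (by fun_prop)
  have hpe : Measurable fun p : Conf E d × (S → F) => (p.1, ext p.2) :=
    measurable_fst.prodMk (hext.comp measurable_snd)
  have hhe : Measurable fun p : Conf E d × (S → F) => h p.1 (ext p.2) := hh.comp hpe
  have e1 : ∀ ω, h (X ω) (Y ω) = h (X ω) (ext fun v : S => Y ω v) := fun ω =>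
    hdep _ _ _ fun v hv => by simp [ext, hv]
  have e2 : ∀ (x : Conf E d) (y : S → F),
      ENNReal.ofReal (∏ v : S, g v (x v) (y v)) = Gd g S x (ext y) := by
    intro x y
    unfold Gd
    rw [← Finset.prod_coe_sort S (fun v => g v (x v) (ext y v))]
    simp [ext]
  have e3 : Measurable (fun p : Conf E d × (Site d → F) => Gd g S p.1 p.2 * h p.1 p.2) :=
    (Gd_meas g hgm S).mul hh
  rw [lintegral_map (e3.lintegral_prod_left') hext]
  calc ∫⁻ ω, h (X ω) (Y ω) ∂P
      = ∫⁻ p, h p.1 (ext p.2) ∂(P.map (fun ω => (X ω, fun v : S => Y ω v))) := by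
        rw [lintegral_map hhe hZ]; exact lintegral_congr e1
    _ = _ := by
        rw [joint P φ g hgm hgpos hgint X hXm Y hYm hobs S,
          lintegral_withDensity_eq_lintegral_mul _ hGm hhe,
          lintegral_prod_symm _ (hGm.mul hhe).aemeasurable]
        simp only [Pi.mul_apply, e2]

/-- **Proposition 5.5(2).**  For a hidden Markov random field with local nondegenerate
observations, `γ_V^Y(X, A)` is a version of `P[X ∈ A | X_{V^c}, Y]`. -/
theorem statement14 [Fintype E] {F : Type*} [MeasurableSpace F] [StandardBorelSpace F]
    {Ω : Type*} [MeasurableSpace Ω] (P : Measure Ω) [IsProbabilityMeasure P]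
    (γ : Finset (Site d) → Conf E d → Measure (Conf E d)) (hγ : IsSpecification γ)
    (φ : Measure F) [SigmaFinite φ]
    (g : Site d → E → F → ℝ) (hgm : ∀ v, Measurable (Function.uncurry (g v)))
    (hgpos : ∀ v e y, 0 < g v e y) (hgint : ∀ v e, ∫ y, g v e y ∂φ = 1)
    (X : Ω → Conf E d) (hXm : Measurable X)
    (hXspec : ∀ (V : Finset (Site d)) (A : Set (Conf E d)), MeasurableSet A →
      (fun ω => (γ V (X ω) A).toReal) =ᵐ[P]
        P[(fun ω => A.indicator (fun _ => (1 : ℝ)) (X ω))|outsideσ X V])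
    (Y : Ω → Site d → F) (hYm : Measurable Y)
    (hobs : ∀ (S : Finset (Site d)) (B : Site d → Set F), (∀ v, MeasurableSet (B v)) →
      P[(fun ω => Set.indicator {ω' | ∀ v ∈ S, Y ω' v ∈ B v} (fun _ => (1 : ℝ)) ω)|
          MeasurableSpace.comap X inferInstance] =ᵐ[P]
        fun ω => ∏ v ∈ S, ∫ y in B v, g v (X ω v) y ∂φ) :
    ∀ (V : Finset (Site d)) (A : Set (Conf E d)), MeasurableSet A →
      (fun ω => (condKer γ g (Y ω) V (X ω) A).toReal) =ᵐ[P]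
        P[(fun ω => A.indicator (fun _ => (1 : ℝ)) (X ω))|
          outsideσ X V ⊔ MeasurableSpace.comap Y inferInstance] := by
  classical
  intro V A hA
  have hΩ : Nonempty Ω := P.nonempty_of_neZero
  have hF : Nonempty F := ⟨Y hΩ.some 0⟩
  have hout : outsideσ X V = MeasurableSpace.comap X (cylσ E ((↑V : Set (Site d))ᶜ)) := by
    simp only [outsideσ, cylσ, MeasurableSpace.comap_iSup, MeasurableSpace.comap_comp]
    rfl
  let Z : Ω → Conf E d × (Site d → F) := fun ω => (X ω, Y ω)
  have hm : outsideσ X V ⊔ MeasurableSpace.comap Y inferInstance =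
      MeasurableSpace.comap Z
        ((cylσ E ((↑V : Set (Site d))ᶜ)).prod MeasurableSpace.pi) := by
    rw [hout]
    simp only [MeasurableSpace.prod, MeasurableSpace.comap_sup, MeasurableSpace.comap_comp]
    rfl
  have hXm' : @Measurable _ _ _ (cylσ E ((↑V : Set (Site d))ᶜ)) X :=
    hXm.mono le_rfl (cylσ_le _)
  have hZ : @Measurable _ _ _ ((cylσ E ((↑V : Set (Site d))ᶜ)).prod MeasurableSpace.pi) Z :=
    @Measurable.prodMk _ _ _ _ (cylσ E ((↑V : Set (Site d))ᶜ)) _ _ _ hXm' hYm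
  have hle := hZ.comap_le
  have hR := condKer_meas hγ g hgm V A hA
  have hRm : Measurable[MeasurableSpace.comap Z
      ((cylσ E ((↑V : Set (Site d))ᶜ)).prod MeasurableSpace.pi)]
      (fun ω => condKer γ g (Y ω) V (X ω) A) := 
    @comap_meas Ω (Conf E d × (Site d → F)) ENNReal
      ((cylσ E ((↑V : Set (Site d))ᶜ)).prod MeasurableSpace.pi) _ Z
      (fun p => condKer γ g p.2 V p.1 A) hR
  have hRm0 := hRm.mono hle le_rfl
  have hXA : MeasurableSet (X ⁻¹' A) := hXm hA
  have hμ : (P.map X).bind (γ V) = P.map X := by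
    ext B hB
    have hγm := Measure.measurable_of_measurable_coe _ (hγ.kernel V)
    rw [Measure.bind_apply hB hγm.aemeasurable, lintegral_map (hγ.kernel V B hB) hXm,
      Measure.map_apply hXm hB]
    have hXB : MeasurableSet (X ⁻¹' B) := hXm hB
    have hle' : outsideσ X V ≤ (inferInstance : MeasurableSpace Ω) := by
      rw [hout]; exact hXm'.comap_le
    have h1 := integral_congr_ae (hXspec V B hB)
    rw [integral_condExp hle'] at h1
    have h2 : ∫ ω, B.indicator (fun _ => (1 : ℝ)) (X ω) ∂P = P.real (X ⁻¹' B) := by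
      rw [← integral_indicator_one hXB]; rfl
    have hp := hγ.prob V
    rw [h2, integral_toReal (f := fun ω => γ V (X ω) B) ((hγ.kernel V B hB).comp hXm).aemeasurable
      (ae_of_all _ fun ω => measure_lt_top _ _), measureReal_def,
      ENNReal.toReal_eq_toReal_iff' ?_ (measure_ne_top _ _)] at h1
    · exact h1
    · refine ne_top_of_le_ne_top ENNReal.one_ne_top
        ((lintegral_mono fun ω => prob_le_one).trans ?_)
      simp
  -- key equality of measures
  have key : @Measure.map _ _ _ ((cylσ E ((↑V : Set (Site d))ᶜ)).prod MeasurableSpace.pi) Z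
        (P.restrict (X ⁻¹' A)) =
      @Measure.map _ _ _ ((cylσ E ((↑V : Set (Site d))ᶜ)).prod MeasurableSpace.pi) Z
        (P.withDensity fun ω => condKer γ g (Y ω) V (X ω) A) := by
    refine @ext_cyl _ _ _ (cylσ E ((↑V : Set (Site d))ᶜ)) _ _ _
      (@IsFiniteMeasure.mk _ (_) _ (by
        rw [@Measure.map_apply _ _ _ (_) _ _ hZ _ (@MeasurableSet.univ _ (_))]
        exact measure_lt_top _ _)) ?_
    intro B S D hB hD
    have hC : MeasurableSet {y : Site d → F | ∀ v ∈ S, y v ∈ D v} :=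
      MeasurableSet.pi S.countable_toSet fun v _ => hD v
    have hB0 : MeasurableSet[MeasurableSpace.pi] B := cylσ_le _ _ hB
    have hBC := @MeasurableSet.prod _ _ (cylσ E ((↑V : Set (Site d))ᶜ)) _ _ _ hB hC
    set C := {y : Site d → F | ∀ v ∈ S, y v ∈ D v} with hCdef
    have hW := hZ hBC
    rw [@Measure.map_apply _ _ _ (_) _ _ hZ _ hBC, @Measure.map_apply _ _ _ (_) _ _ hZ _ hBC,
      Measure.restrict_apply hW, withDensity_apply _ hW]
    obtain ⟨ρ, hρ⟩ := joint_lint P φ g hgm hgpos hgint X hXm Y hYm hobs (S ∪ V)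
    have hCdep : ∀ y y' : Site d → F, (∀ v ∈ S ∪ V, y v = y' v) → (y ∈ C ↔ y' ∈ C) := by
      intro y y' h
      refine forall₂_congr fun v hv => ?_
      rw [h v (Finset.mem_union_left _ hv)]
    let q : Conf E d → (Site d → F) → ENNReal := fun x y =>
      B.indicator 1 x * C.indicator 1 y
    have hq : Measurable
        (Function.uncurry q) := by
      refine Measurable.mul ?_ ?_
      · exact Measurable.comp (measurable_one.indicator hB0) measurable_fst
      · exact Measurable.comp (measurable_one.indicator hC) measurable_snd
    have hqdep : ∀ x y y', (∀ v ∈ S ∪ V, y v = y' v) → q x y = q x y' := by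
      intro x y y' h
      simp only [q, Set.indicator, hCdep y y' h, Pi.one_apply]
    have hR0 : Measurable
        (fun p : Conf E d × (Site d → F) => condKer γ g p.2 V p.1 A) := by
      refine hR.mono ?_ le_rfl
      exact sup_le_sup (MeasurableSpace.comap_mono (cylσ_le _)) le_rfl
    have hRdep : ∀ x y y', (∀ v ∈ S ∪ V, y v = y' v) →
        condKer γ g y V x A = condKer γ g y' V x A := by
      intro x y y' h
      have : ∀ z, Gd g V z y = Gd g V z y' := fun z => by
        unfold Gd
        rw [Finset.prod_congr rfl fun v hv => by rw [h v (Finset.mem_union_right _ hv)]]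
      simp only [condKer_apply _ _ _ _ _ _ hA, this]
    have hA1 : Measurable
        (fun p : Conf E d × (Site d → F) => A.indicator (1 : Conf E d → ENNReal) p.1) :=
      Measurable.comp (measurable_one.indicator hA) measurable_fst
    have hl := hρ (fun x y => q x y * A.indicator 1 x) (Measurable.mul hq hA1)
      (fun x y y' h => by simp only [hqdep x y y' h])
    have hr := hρ (fun x y => q x y * condKer γ g y V x A)
      (Measurable.mul hq hR0)
      (fun x y y' h => by simp only [hqdep x y y' h, hRdep x y y' h])
    have hl' : P (Z ⁻¹' B ×ˢ C ∩ X ⁻¹' A) = ∫⁻ ω, q (X ω) (Y ω) * A.indicator 1 (X ω) ∂P := by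
      rw [← lintegral_indicator_one (hW.inter hXA)]
      refine lintegral_congr fun ω => ?_
      by_cases h1 : X ω ∈ B <;> by_cases h2 : Y ω ∈ C <;> by_cases h3 : X ω ∈ A <;>
        simp [q, Z, Set.indicator, h1, h2, h3]
    have hr' : ∫⁻ ω in Z ⁻¹' B ×ˢ C, condKer γ g (Y ω) V (X ω) A ∂P
        = ∫⁻ ω, q (X ω) (Y ω) * condKer γ g (Y ω) V (X ω) A ∂P := by
      rw [← lintegral_indicator hW]
      refine lintegral_congr fun ω => ?_
      by_cases h1 : X ω ∈ B <;> by_cases h2 : Y ω ∈ C <;>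
        simp [q, Z, Set.indicator, h1, h2]
    rw [hl', hr', hl, hr]
    refine lintegral_congr fun y => ?_
    have hsplit : ∀ x : Conf E d, Gd g (S ∪ V) x y = Gd g ((S ∪ V) \ V) x y * Gd g V x y := by
      intro x
      unfold Gd
      rw [← Finset.prod_sdiff (Finset.subset_union_right : V ⊆ S ∪ V), ENNReal.ofReal_mul]
      exact Finset.prod_nonneg fun v _ => (hgpos _ _ _).le
    have hk : Measurable[cylσ E ((↑V : Set (Site d))ᶜ)]
        fun x => Gd g ((S ∪ V) \ V) x y * q x y := by
      refine Measurable.mul (Gd_meas_out g hgm _ _ ?_ y) ?_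
      · intro v hv
        simp only [Finset.coe_sdiff] at hv
        exact hv.2
      · exact Measurable.mul 
          (@Measurable.indicator _ _ (_) _ _ _ _ (@measurable_const _ _ _ (_) (1 : ENNReal)) hB)
          (@measurable_const _ _ _ (_) _)
    have hfix := fixed_y hγ g hgm hgpos V y (P.map X) hμ _ hk A hA
    refine Eq.trans ?_ (hfix.symm.trans ?_)
    · refine lintegral_congr fun x => ?_
      rw [hsplit]
      by_cases h3 : x ∈ A
      · simp [h3]; ring
      · simp [h3]
    · refine lintegral_congr fun x => ?_
      rw [hsplit]; ring
  rw [hm]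
  have hRle : ∀ ω, condKer γ g (Y ω) V (X ω) A ≤ 1 := fun ω =>
    condKer_le_one hγ g hgm hgpos V _ _ A
  have hRint : Integrable (fun ω => (condKer γ g (Y ω) V (X ω) A).toReal) P := by
    refine integrable_toReal_of_lintegral_ne_top hRm0.aemeasurable
      (ne_top_of_le_ne_top ENNReal.one_ne_top ((lintegral_mono hRle).trans ?_))
    simp
  refine ae_eq_condExp_of_forall_setIntegral_eq hle ?_ (fun s _ _ => hRint.integrableOn) ?_ ?_
  · exact (integrable_const (1 : ℝ)).indicator hXA
  · rintro _ ⟨W, hW, rfl⟩ _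
    have hW0 := hZ hW
    have h1 := congrArg (fun ν => ν W) key
    rw [@Measure.map_apply _ _ _ (_) _ _ hZ _ hW, @Measure.map_apply _ _ _ (_) _ _ hZ _ hW,
      Measure.restrict_apply hW0, withDensity_apply _ hW0] at h1
    rw [integral_toReal hRm0.aemeasurable
      (ae_of_all _ fun ω => (hRle ω).trans_lt ENNReal.one_lt_top), ← h1]
    have h2 : ∫ ω in Z ⁻¹' W, A.indicator (fun _ => (1 : ℝ)) (X ω) ∂P
        = (P.restrict (Z ⁻¹' W)).real (X ⁻¹' A) := by
      rw [← integral_indicator_one hXA]; rfl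
    rw [h2, measureReal_def, Measure.restrict_apply hXA, Set.inter_comm]
  · exact (hRm.ennreal_toReal).stronglyMeasurable.aestronglyMeasurable

end RandomField
end
end

section
/- Suppose the specification γ is monotone. Then: (1) for every y ∈ {−1,1}^{ℤ^d}, the conditional specification γ^y is monotone; and (2) for every finite V ⊂ ℤ^d and every bounded increasing f : Ω → ℝ, the map (x, y) ↦ (γ_V^y f)(x) is increasing in x and increasing in y (with respect to the pointwise partial orders). -/
open MeasureTheory Filter

noncomputable section

namespace RandomField

variable {E : Type*} [MeasurableSpace E] {d : ℕ}

/-- The two-point spin space `{-1, 1} ⊆ ℝ`. -/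
abbrev Spin : Type := ({-1, 1} : Set ℝ)

/-- Spin configurations `{-1,1}^{ℤ^d}`, with the pointwise partial order. -/
abbrev SConf (d : ℕ) := Site d → Spin

/-- Boundedness of a real-valued function. -/
def Bdd {α : Type*} (f : α → ℝ) : Prop := ∃ C, ∀ x, |f x| ≤ C

/-- A local function: one depending on only finitely many coordinates. -/
def IsLocal {d : ℕ} (f : SConf d → ℝ) : Prop :=
  ∃ S : Finset (Site d), ∀ x z : SConf d, (∀ v ∈ S, x v = z v) → f x = f z

/-- A specification is monotone if `γ_V f` is increasing for every bounded
(measurable) increasing `f` and every finite `V`. -/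
def MonotoneSpec {d : ℕ} (γ : Finset (Site d) → SConf d → Measure (SConf d)) : Prop :=
  ∀ (V : Finset (Site d)) (f : SConf d → ℝ), Measurable f → Monotone f → Bdd f →
    Monotone fun x => ∫ z, f z ∂(γ V x)

/-- `μ` is specified by `δ`: `∫_B δ_V(x, A) μ(dx) = μ(A ∩ B)` for every finite `V`,
measurable `A`, and `B ∈ σ(X_{V^c})`. -/
def SpecifiedBy {d : ℕ} (δ : Finset (Site d) → SConf d → Measure (SConf d))
    (μ : Measure (SConf d)) : Prop :=
  ∀ (V : Finset (Site d)) (A B : Set (SConf d)), MeasurableSet A →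
    MeasurableSet[cylσ Spin ((↑V : Set (Site d))ᶜ)] B →
    ∫⁻ x in B, δ V x A ∂μ = μ (A ∩ B)

/-- The conditional specification
`γ_V^y(x, A) ∝ ∫ 1_A(z) ∏_{v∈V} e^{β_v y_v z_v} γ_V(x, dz)`. -/
def condSpinKer {d : ℕ} (γ : Finset (Site d) → SConf d → Measure (SConf d))
    (β : Site d → ℝ) (y : SConf d) (V : Finset (Site d)) (x : SConf d) :
    Measure (SConf d) :=
  let ρ := (γ V x).withDensity fun z =>
    ENNReal.ofReal (Real.exp (∑ v ∈ V, β v * (y v : ℝ) * (z v : ℝ)))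
  (ρ Set.univ)⁻¹ • ρ

/-- The maximal configuration `𝐛+`. -/
def bpos {d : ℕ} : SConf d := fun _ => ⟨1, by norm_num⟩

/-- The minimal configuration `𝐛−`. -/
def bneg {d : ℕ} : SConf d := fun _ => ⟨-1, by norm_num⟩

/-! ### Helper lemmas -/

def sp : Spin := ⟨1, by norm_num⟩
def sm : Spin := ⟨-1, by norm_num⟩

lemma spin_cases (s : Spin) : s = sp ∨ s = sm := by
  obtain ⟨s, hs⟩ := s
  rcases hs with h | h
  · right; exact Subtype.ext h
  · left; exact Subtype.ext h

lemma sm_le_sp : sm ≤ sp := by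
  change (-1 : ℝ) ≤ 1
  norm_num

lemma sp_ne_sm : sp ≠ sm := by
  intro h
  have : (1 : ℝ) = -1 := congrArg Subtype.val h
  norm_num at this

instance : Finite Spin := by
  change Finite (({-1, 1} : Set ℝ) : Type)
  exact ((Set.finite_singleton (1:ℝ)).insert (-1)).to_subtype

lemma cyl_agree {S : Set (Site d)} {g : Conf E d → ENNReal} (hg : Measurable[cylσ E S] g)
    {x x' : Conf E d} (h : ∀ v ∈ S, x v = x' v) : g x = g x' := by
  have hle : cylσ E S ≤ MeasurableSpace.comap (S.domRestrict : Conf E d → (S → E)) inferInstance := by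
    refine iSup₂_le fun v hv => ?_
    have hm : Measurable fun p : S → E => p ⟨v, hv⟩ := measurable_pi_apply _
    rintro A ⟨B, hB, rfl⟩
    exact ⟨(fun p : S → E => p ⟨v, hv⟩) ⁻¹' B, hm hB, rfl⟩
  have h1 : MeasurableSet[cylσ E S] (g ⁻¹' {g x}) := hg (measurableSet_singleton _)
  obtain ⟨B, -, hB⟩ := hle _ h1
  have hr : S.domRestrict x = S.domRestrict x' := by
    funext v; exact h v.1 v.2
  have hx : x ∈ g ⁻¹' {g x} := rfl
  rw [← hB] at hx
  have hx' : x' ∈ g ⁻¹' {g x} := by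
    rw [← hB]
    change S.domRestrict x' ∈ B
    rw [← hr]; exact hx
  exact hx'.symm

lemma spec_ae {γ : Finset (Site d) → SConf d → Measure (SConf d)}
    (hγ : IsSpecification γ) (V : Finset (Site d)) (x : SConf d) :
    ∀ᵐ z ∂(γ V x), ∀ u, u ∉ V → z u = x u := by
  have := hγ.prob V x
  rw [ae_all_iff]
  intro u
  by_cases hu : u ∈ V
  · exact Eventually.of_forall fun z h => absurd hu h
  have hm : MeasurableSet[cylσ Spin ((↑V : Set (Site d))ᶜ)] {z : SConf d | z u = x u} := by
    have hle : MeasurableSpace.comap (fun x : SConf d => x u) inferInstance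
        ≤ cylσ Spin ((↑V : Set (Site d))ᶜ) :=
      le_iSup₂_of_le (f := fun v (_ : v ∈ ((↑V : Set (Site d))ᶜ)) =>
        MeasurableSpace.comap (fun x : SConf d => x v) inferInstance) u (by simpa using hu) le_rfl
    exact hle _ ⟨{x u}, measurableSet_singleton _, rfl⟩
  have h1 := hγ.proper V _ hm x
  rw [Set.indicator_of_mem (by simp)] at h1
  have hm' : MeasurableSet {z : SConf d | z u = x u} :=
    measurableSet_eq_fun (measurable_pi_apply u) measurable_const
  have h2 : ∀ᵐ z ∂(γ V x), z ∈ {z : SConf d | z u = x u} :=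
    (mem_ae_iff_prob_eq_one hm').2 h1
  filter_upwards [h2] with z hz _ using hz

open Classical in
lemma spec_dep {γ : Finset (Site d) → SConf d → Measure (SConf d)}
    (hγ : IsSpecification γ) (W : Finset (Site d)) {z z' : SConf d}
    (h : ∀ u, u ∉ W → z u = z' u) : γ W z = γ W z' := by
  set gl : SConf d → SConf d := fun u v => if v ∈ W then u v else z v with hgl
  have hglm : Measurable[cylσ Spin (↑W : Set (Site d))] gl := by
    refine @measurable_pi_lambda _ _ _ (cylσ Spin (↑W : Set (Site d))) _ _ fun v => ?_
    by_cases hv : v ∈ W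
    · simp only [hgl, hv, if_true]
      have hle : MeasurableSpace.comap (fun x : SConf d => x v) inferInstance
          ≤ cylσ Spin (↑W : Set (Site d)) :=
        le_iSup₂_of_le (f := fun v (_ : v ∈ (↑W : Set (Site d))) =>
          MeasurableSpace.comap (fun x : SConf d => x v) inferInstance) v (by simpa using hv) le_rfl
      exact measurable_iff_comap_le.2 hle
    · simp only [hgl, hv, if_false]
      exact @measurable_const _ _ _ (cylσ Spin (↑W : Set (Site d))) _
  ext A hA
  have e1 : γ W z A = γ W z (gl ⁻¹' A) := by
    apply measure_congr
    filter_upwards [spec_ae hγ W z] with u hu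
    have : gl u = u := by
      funext v
      by_cases hv : v ∈ W
      · simp [hgl, hv]
      · simp [hgl, hv, hu v hv]
    change (u ∈ A) = (gl u ∈ A)
    rw [this]
  have e2 : γ W z' A = γ W z' (gl ⁻¹' A) := by
    apply measure_congr
    filter_upwards [spec_ae hγ W z'] with u hu
    have : gl u = u := by
      funext v
      by_cases hv : v ∈ W
      · simp [hgl, hv]
      · simp [hgl, hv, hu v hv, h v hv]
    change (u ∈ A) = (gl u ∈ A)
    rw [this]
  rw [e1, e2]
  exact cyl_agree (hγ.bdryMeas W _ (hglm hA)) fun v hv => h v hv.1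

lemma bdd_int {μ : Measure (SConf d)} [IsProbabilityMeasure μ] {g : SConf d → ℝ}
    (hg : Measurable g) (hb : Bdd g) : Integrable g μ := by
  obtain ⟨C, hC⟩ := hb
  exact Integrable.of_bound hg.aestronglyMeasurable C (Eventually.of_forall hC)

lemma spec_cons {γ : Finset (Site d) → SConf d → Measure (SConf d)}
    (hγ : IsSpecification γ) {V W : Finset (Site d)} (hWV : W ⊆ V) (x : SConf d)
    {g : SConf d → ℝ} (hg : Measurable g) (hb : Bdd g) :
    ∫ z, g z ∂(γ V x) = ∫ z, ∫ u, g u ∂(γ W z) ∂(γ V x) := by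
  have := hγ.prob V x
  have hk : Measurable (γ W) := Measure.measurable_of_measurable_coe _ (hγ.kernel W)
  have hbind : (γ V x).bind (γ W) = γ V x := by
    ext A hA
    rw [Measure.bind_apply hA hk.aemeasurable]
    exact hγ.consistent V W hWV A hA x
  have hk' : Measurable (γ V) := Measure.measurable_of_measurable_coe _ (hγ.kernel V)
  let η : ProbabilityTheory.Kernel (SConf d) (SConf d) := ⟨γ W, hk⟩
  let κ : ProbabilityTheory.Kernel (SConf d) (SConf d) := ⟨γ V, hk'⟩
  have : ProbabilityTheory.IsMarkovKernel η := ⟨hγ.prob W⟩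
  have : ProbabilityTheory.IsMarkovKernel κ := ⟨hγ.prob V⟩
  have hcomp : (η.comp κ) x = γ V x := by
    rw [ProbabilityTheory.Kernel.comp_apply]; exact hbind
  have h3 := ProbabilityTheory.Kernel.integral_comp (κ := κ) (η := η) (a := x) (f := g)
    (by rw [hcomp]; exact bdd_int hg hb)
  rw [hcomp] at h3
  exact h3

lemma bdd_mul {f g : SConf d → ℝ} (hf : Bdd f) (hg : Bdd g) : Bdd fun z => f z * g z := by
  obtain ⟨C, hC⟩ := hf
  obtain ⟨D, hD⟩ := hg
  refine ⟨C * D, fun x => ?_⟩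
  rw [abs_mul]
  exact mul_le_mul (hC x) (hD x) (abs_nonneg _) ((abs_nonneg _).trans (hC x))

lemma bdd_spin (φ : Spin → ℝ) (v : Site d) : Bdd fun z : SConf d => φ (z v) := by
  refine ⟨|φ sp| + |φ sm|, fun z => ?_⟩
  have h1 := abs_nonneg (φ sp)
  have h2 := abs_nonneg (φ sm)
  rcases spin_cases (z v) with h | h <;> simp only [h] <;> linarith

lemma meas_spin (φ : Spin → ℝ) (v : Site d) : Measurable fun z : SConf d => φ (z v) :=
  (measurable_of_finite φ).comp (measurable_pi_apply v)

lemma spec_out {γ : Finset (Site d) → SConf d → Measure (SConf d)}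
    (hγ : IsSpecification γ) {V : Finset (Site d)} {v : Site d} (hv : v ∉ V) (x : SConf d)
    (g : SConf d → ℝ) (φ : Spin → ℝ) :
    ∫ z, φ (z v) * g z ∂(γ V x) = φ (x v) * ∫ z, g z ∂(γ V x) := by
  rw [← integral_const_mul]
  apply integral_congr_ae
  filter_upwards [spec_ae hγ V x] with z hz
  rw [hz v hv]

lemma spec_in {γ : Finset (Site d) → SConf d → Measure (SConf d)}
    (hγ : IsSpecification γ) {V : Finset (Site d)} {v : Site d} (x : SConf d)
    {g : SConf d → ℝ} (hg : Measurable g) (hb : Bdd g) (φ : Spin → ℝ) :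
    ∫ z, φ (z v) * g z ∂(γ V x) =
      φ sp * (γ V x).real {z | z v = sp} *
        ∫ z, g z ∂(γ (V.erase v) (Function.update x v sp)) +
      φ sm * (γ V x).real {z | z v = sm} *
        ∫ z, g z ∂(γ (V.erase v) (Function.update x v sm)) := by
  have := hγ.prob V x
  rw [spec_cons hγ (Finset.erase_subset v V) x (g := fun z => φ (z v) * g z)
    ((meas_spin φ v).mul hg)
    (bdd_mul (bdd_spin φ v) hb)]
  set Ψ : Spin → ℝ := fun s => φ s * ∫ z, g z ∂(γ (V.erase v) (Function.update x v s)) with hΨ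
  have e1 : ∀ᵐ z ∂(γ V x), ∫ u, φ (u v) * g u ∂(γ (V.erase v) z) = Ψ (z v) := by
    filter_upwards [spec_ae hγ V x] with z hz
    rw [spec_out hγ (Finset.notMem_erase v V)]
    rw [spec_dep hγ (V.erase v) (z := z) (z' := Function.update x v (z v))]
    intro u hu
    by_cases huv : u = v
    · subst huv; simp
    · rw [Function.update_of_ne huv]
      exact hz u fun h => hu (Finset.mem_erase.2 ⟨huv, h⟩)
  rw [integral_congr_ae e1]
  have hms : ∀ s : Spin, MeasurableSet {z : SConf d | z v = s} := fun s =>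
    measurableSet_eq_fun (measurable_pi_apply v) measurable_const
  have e2 : ∀ z : SConf d, Ψ (z v) = {z : SConf d | z v = sp}.indicator (fun _ => Ψ sp) z +
      {z : SConf d | z v = sm}.indicator (fun _ => Ψ sm) z := by
    intro z
    rcases spin_cases (z v) with h | h
    · simp [Set.indicator, h, sp_ne_sm]
    · simp [Set.indicator, h, sp_ne_sm.symm]
  simp_rw [e2]
  rw [integral_add ((integrable_const _).indicator (hms _))
    ((integrable_const _).indicator (hms _)), integral_indicator_const _ (hms _),
    integral_indicator_const _ (hms _)]
  simp only [hΨ, smul_eq_mul]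
  ring

def Comp (γ : Finset (Site d) → SConf d → Measure (SConf d)) (h h' : SConf d → ℝ) : Prop :=
  ∀ (V : Finset (Site d)) (f : SConf d → ℝ), Measurable f → Monotone f → Bdd f →
    ∀ x x' : SConf d, x ≤ x' →
      (∫ z, h z * f z ∂(γ V x)) * (∫ z, h' z ∂(γ V x')) ≤
        (∫ z, h' z * f z ∂(γ V x')) * (∫ z, h z ∂(γ V x))

lemma int_pos {μ : Measure (SConf d)} [IsProbabilityMeasure μ] {g : SConf d → ℝ}
    (hg : Measurable g) (hb : Bdd g) (hp : ∀ z, 0 < g z) : 0 < ∫ z, g z ∂μ := by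
  rw [integral_pos_iff_support_of_nonneg (fun z => (hp z).le) (bdd_int hg hb)]
  have : Function.support g = Set.univ := by
    ext z; simp [(hp z).ne']
  rw [this]; simp

lemma algebra_core {e i e' i' a b a' b' Np Nm Np' Nm' Dp Dm Dp' Dm' : ℝ}
    (he : 0 < e) (hi : 0 < i) (he' : 0 < e') (hi' : 0 < i')
    (ha : 0 ≤ a) (hb : 0 ≤ b) (ha' : 0 ≤ a') (hb' : 0 ≤ b')
    (hDp : 0 < Dp) (hDm : 0 < Dm) (hDp' : 0 < Dp') (hDm' : 0 < Dm')
    (hei : e * i' ≤ e' * i)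
    (hpp : Np * Dp' ≤ Np' * Dp) (hmm : Nm * Dm' ≤ Nm' * Dm) (hmp : Nm * Dp' ≤ Np' * Dm)
    (hodds : (a * Dp) * (a' * Dp' + b' * Dm') ≤ (a' * Dp') * (a * Dp + b * Dm)) :
    (e * a * Np + i * b * Nm) * (e' * a' * Dp' + i' * b' * Dm') ≤
      (e' * a' * Np' + i' * b' * Nm') * (e * a * Dp + i * b * Dm) := by
  obtain ⟨Fp, rfl⟩ : ∃ F, Np = F * Dp := ⟨Np / Dp, by field_simp⟩
  obtain ⟨Fm, rfl⟩ : ∃ F, Nm = F * Dm := ⟨Nm / Dm, by field_simp⟩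
  obtain ⟨Fp', rfl⟩ : ∃ F, Np' = F * Dp' := ⟨Np' / Dp', by field_simp⟩
  obtain ⟨Fm', rfl⟩ : ∃ F, Nm' = F * Dm' := ⟨Nm' / Dm', by field_simp⟩
  have hpp1 : Fp ≤ Fp' := by
    have : 0 < Dp * Dp' := by positivity
    nlinarith
  have hmm1 : Fm ≤ Fm' := by
    have : 0 < Dm * Dm' := by positivity
    nlinarith
  have hmp1 : Fm ≤ Fp' := by
    have : 0 < Dm * Dp' := by positivity
    nlinarith
  have hPQ : (a * Dp) * (b' * Dm') ≤ (a' * Dp') * (b * Dm) := by nlinarith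
  have hU0 : 0 ≤ (e * i') * ((a * Dp) * (b' * Dm')) := by positivity
  have hUW : (e * i') * ((a * Dp) * (b' * Dm')) ≤ (e' * i) * ((a' * Dp') * (b * Dm)) :=
    mul_le_mul hei hPQ (by positivity) (by positivity)
  have k1 : 0 ≤ (e * e' * (a * Dp) * (a' * Dp')) * (Fp' - Fp) :=
    mul_nonneg (by positivity) (by linarith)
  have k2 : 0 ≤ (i * i' * (b * Dm) * (b' * Dm')) * (Fm' - Fm) :=
    mul_nonneg (by positivity) (by linarith)
  have k3 := mul_nonneg hU0 (sub_nonneg.2 hpp1)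
  have k4 := mul_nonneg hU0 (sub_nonneg.2 hmm1)
  have k5 := mul_nonneg (sub_nonneg.2 hUW) (sub_nonneg.2 hmp1)
  linear_combination k1 + k2 + k3 + k4 + k5

open Classical in
lemma comp_step {γ : Finset (Site d) → SConf d → Measure (SConf d)}
    (hγ : IsSpecification γ) {h h' : SConf d → ℝ}
    (hm : Measurable h) (hb : Bdd h) (hp : ∀ z, 0 < h z)
    (hm' : Measurable h') (hb' : Bdd h') (hp' : ∀ z, 0 < h' z)
    (H : Comp γ h h') (v : Site d) (φ φ' : Spin → ℝ) (hφ : ∀ s, 0 < φ s) (hφ' : ∀ s, 0 < φ' s)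
    (hφφ : φ sp * φ' sm ≤ φ' sp * φ sm) :
    Comp γ (fun z => φ (z v) * h z) (fun z => φ' (z v) * h' z) := by
  intro V f hf hfm hfb x x' hx
  simp only [mul_assoc]
  by_cases hv : v ∈ V
  swap
  · rw [spec_out hγ hv x (fun z => h z * f z) φ, spec_out hγ hv x h φ,
      spec_out hγ hv x' (fun z => h' z * f z) φ', spec_out hγ hv x' h' φ']
    have := mul_le_mul_of_nonneg_left (H V f hf hfm hfb x x' hx)
      (mul_pos (hφ (x v)) (hφ' (x' v))).le
    linarith
  rw [spec_in hγ x (g := fun z => h z * f z) (hm.mul hf) (bdd_mul hb hfb) φ, spec_in hγ x hm hb φ,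
    spec_in hγ x' (g := fun z => h' z * f z) (hm'.mul hf) (bdd_mul hb' hfb) φ', spec_in hγ x' hm' hb' φ']
  have hP := hγ.prob
  have hup : ∀ s t : Spin, s ≤ t → Function.update x v s ≤ Function.update x' v t := by
    intro s t hst u
    by_cases huv : u = v
    · subst huv; simpa using hst
    · simpa [Function.update_of_ne huv] using hx u
  have hW := H (V.erase v) f hf hfm hfb
  refine algebra_core (hφ _) (hφ _) (hφ' _) (hφ' _) measureReal_nonneg measureReal_nonneg
    measureReal_nonneg measureReal_nonneg (int_pos hm hb hp) (int_pos hm hb hp)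
    (int_pos hm' hb' hp') (int_pos hm' hb' hp') hφφ
    (hW _ _ (hup sp sp le_rfl)) (hW _ _ (hup sm sm le_rfl)) (hW _ _ (hup sm sp sm_le_sp)) ?_
  set I : Spin → ℝ := fun s => if s = sp then 1 else 0 with hI
  have hImono : Monotone I := by
    intro s t hst
    rcases spin_cases s with h1 | h1 <;> rcases spin_cases t with h2 | h2
    · simp [h1, h2]
    · rw [h1, h2] at hst
      exact absurd (le_antisymm hst sm_le_sp) sp_ne_sm
    · simp [hI, h1, h2, sp_ne_sm.symm]
    · simp [h1, h2]
  have hV := H V (fun z => I (z v)) (meas_spin I v) (fun z z' hz => hImono (hz v))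
    (bdd_spin I v) x x' hx
  have e1 := spec_in hγ (V := V) (v := v) x hm hb I
  have e1' := spec_in hγ (V := V) (v := v) x' hm' hb' I
  have e2 := spec_in hγ (V := V) (v := v) x hm hb (fun _ => 1)
  have e2' := spec_in hγ (V := V) (v := v) x' hm' hb' (fun _ => 1)
  simp only [one_mul] at e2 e2'
  simp only [hI, sp_ne_sm.symm, if_true, if_false, one_mul, zero_mul, add_zero] at e1 e1'
  simp only [hI, mul_comm (h _), mul_comm (h' _)] at hV
  rw [e1, e1', e2, e2'] at hV
  exact hV

def wt (c : Site d → ℝ) (T : Finset (Site d)) (z : SConf d) : ℝ :=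
  Real.exp (∑ v ∈ T, c v * (z v : ℝ))

lemma wt_pos (c : Site d → ℝ) (T : Finset (Site d)) (z : SConf d) : 0 < wt c T z :=
  Real.exp_pos _

lemma wt_meas (c : Site d → ℝ) (T : Finset (Site d)) : Measurable (wt c T) := by
  unfold wt
  refine Real.measurable_exp.comp (Finset.measurable_fun_sum _ fun v _ => ?_)
  exact meas_spin (fun s => c v * (s : ℝ)) v

open Classical in
lemma wt_insert (c : Site d → ℝ) (T : Finset (Site d)) (v : Site d) (hv : v ∉ T) :
    wt c (insert v T) = fun z => (fun s : Spin => Real.exp (c v * (s : ℝ))) (z v) * wt c T z := by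
  funext z
  simp [wt, Finset.sum_insert hv, Real.exp_add]

open Classical in
lemma wt_bdd (c : Site d → ℝ) (T : Finset (Site d)) : Bdd (wt c T) := by
  induction T using Finset.induction_on with
  | empty => exact ⟨1, fun x => by simp [wt]⟩
  | insert v T hv ih =>
    rw [wt_insert c T v hv]
    exact bdd_mul (bdd_spin (fun s : Spin => Real.exp (c v * (s : ℝ))) v) ih

open Classical in
lemma comp_wt {γ : Finset (Site d) → SConf d → Measure (SConf d)}
    (hγ : IsSpecification γ) (hmono : MonotoneSpec γ) (c c' : Site d → ℝ) (hc : ∀ v, c v ≤ c' v)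
    (T : Finset (Site d)) : Comp γ (wt c T) (wt c' T) := by
  have hP := hγ.prob
  induction T using Finset.induction_on with
  | empty =>
    intro V f hf hfm hfb x x' hx
    simpa [wt] using hmono V f hf hfm hfb hx
  | insert v T hv ih =>
    rw [wt_insert c T v hv, wt_insert c' T v hv]
    refine comp_step hγ (wt_meas c T) (wt_bdd c T) (wt_pos c T) (wt_meas c' T) (wt_bdd c' T)
      (wt_pos c' T) ih v (fun s : Spin => Real.exp (c v * (s : ℝ)))
      (fun s : Spin => Real.exp (c' v * (s : ℝ))) (fun s => Real.exp_pos _) (fun s => Real.exp_pos _) ?_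
    rw [← Real.exp_add, ← Real.exp_add]
    apply Real.exp_le_exp.2
    have := hc v
    simp only [sp, sm]
    linarith

lemma cond_integral {γ : Finset (Site d) → SConf d → Measure (SConf d)}
    (hγ : IsSpecification γ) (β : Site d → ℝ) (y : SConf d) (V : Finset (Site d)) (x : SConf d)
    (f : SConf d → ℝ) :
    ∫ z, f z ∂(condSpinKer γ β y V x) =
      (∫ z, wt (fun v => β v * (y v : ℝ)) V z * f z ∂(γ V x)) /
        ∫ z, wt (fun v => β v * (y v : ℝ)) V z ∂(γ V x) := by
  have hP := hγ.prob
  set c : Site d → ℝ := fun v => β v * (y v : ℝ) with hc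
  have hk : condSpinKer γ β y V x =
      (((γ V x).withDensity fun z => ENNReal.ofReal (wt c V z)) Set.univ)⁻¹ •
        (γ V x).withDensity fun z => ENNReal.ofReal (wt c V z) := rfl
  rw [hk, integral_smul_measure, withDensity_apply _ MeasurableSet.univ, Measure.restrict_univ,
    integral_withDensity_eq_integral_toReal_smul (wt_meas c V).ennreal_ofReal
      (Eventually.of_forall fun z => ENNReal.ofReal_lt_top),
    ← ofReal_integral_eq_lintegral_ofReal (bdd_int (wt_meas c V) (wt_bdd c V))
      (Eventually.of_forall fun z => (wt_pos c V z).le)]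
  simp only [smul_eq_mul, ENNReal.toReal_ofReal (wt_pos c V _).le, ENNReal.toReal_inv,
    ENNReal.toReal_ofReal (int_pos (wt_meas c V) (wt_bdd c V) (wt_pos c V)).le]
  rw [div_eq_inv_mul]

lemma main_mono {γ : Finset (Site d) → SConf d → Measure (SConf d)}
    (hγ : IsSpecification γ) (hmono : MonotoneSpec γ)
    (β : Site d → ℝ) (hβ : ∀ v, 0 ≤ β v) (V : Finset (Site d)) (f : SConf d → ℝ)
    (hf : Measurable f) (hfm : Monotone f) (hfb : Bdd f) {x x' y y' : SConf d}
    (hx : x ≤ x') (hy : y ≤ y') :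
    ∫ z, f z ∂(condSpinKer γ β y V x) ≤ ∫ z, f z ∂(condSpinKer γ β y' V x') := by
  have hP := hγ.prob
  rw [cond_integral hγ, cond_integral hγ,
    div_le_div_iff₀ (int_pos (wt_meas _ V) (wt_bdd _ V) (wt_pos _ V))
      (int_pos (wt_meas _ V) (wt_bdd _ V) (wt_pos _ V))]
  exact comp_wt hγ hmono _ _ (fun v => mul_le_mul_of_nonneg_left (hy v) (hβ v)) V V f hf hfm hfb
    x x' hx

/-- **Lemma 5.11 (inheritance of monotonicity).**  If `γ` is a monotone specification and
`β_v ≥ 0`, then every conditional specification `γ^y` is monotone, and for every finite `V`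
and bounded increasing `f`, `(x, y) ↦ (γ_V^y f)(x)` is increasing in `x` and in `y`. -/
theorem statement17 {d : ℕ} (γ : Finset (Site d) → SConf d → Measure (SConf d))
    (hγ : IsSpecification γ) (hmono : MonotoneSpec γ)
    (β : Site d → ℝ) (hβ : ∀ v, 0 ≤ β v) :
    (∀ y : SConf d, MonotoneSpec fun V x => condSpinKer γ β y V x) ∧
      ∀ (V : Finset (Site d)) (f : SConf d → ℝ), Measurable f → Monotone f → Bdd f →
        (∀ y : SConf d, Monotone fun x => ∫ z, f z ∂(condSpinKer γ β y V x)) ∧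
        (∀ x : SConf d, Monotone fun y => ∫ z, f z ∂(condSpinKer γ β y V x)) := by
  exact ⟨fun y V f hf hfm hfb x x' hx => main_mono hγ hmono β hβ V f hf hfm hfb hx le_rfl,
    fun V f hf hfm hfb =>
      ⟨fun y x x' hx => main_mono hγ hmono β hβ V f hf hfm hfb hx le_rfl,
        fun x y y' hy => main_mono hγ hmono β hβ V f hf hfm hfb le_rfl hy⟩⟩

end RandomField
end
end
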